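/- Assume conditions (C1)–(C3): there is α ∈ F⊗F with α·(σ(α)+S) = R; α and each Δ^{ij} are central in F⊗F; and P := α·(x₁−x₂) + β is not a zero divisor in (F⊗F)[x₁,x₂]. Let V_n^{⊗d} be the right B≀H(d)-module defined by the tensor-space action, and let S_{n,d} := End_{B≀H(d)}(V_n^{⊗d}) be its endomorphism 𝕜-algebra (the wreath Schur algebra). If n ≥ d, then the action map B≀H(d) → End_𝕜(V_n^{⊗d}) is injective and its image is exactly the set of 𝕜-linear endomorphisms of V_n^{⊗d} commuting with all elements of S_{n,d}; that is, B≀H(d) ≅ End_{S_{n,d}}(V_n^{⊗d}), so Schur duality holds between S_{n,d} and B≀H(d). -/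

import Mathlib

open scoped TensorProduct
open PiTensorProduct MvPolynomial

variable (k F : Type*) (m : ℕ)

/-- Weak Frobenius elements of `F ⊗ F`: `(a⊗b)·Δ = Δ·(b⊗a)` for all `a, b ∈ F`. -/
def IsWeakFrobenius [CommSemiring k] [Ring F] [Algebra k F] (Δ : F ⊗[k] F) : Prop :=
  ∀ a b : F, (a ⊗ₜ[k] b) * Δ = Δ * (b ⊗ₜ[k] a)

/-- Symmetric elements of `F ⊗ F`: fixed by the flip. -/
def IsSymmEl [CommSemiring k] [Ring F] [Algebra k F] (Δ : F ⊗[k] F) : Prop :=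
  (Algebra.TensorProduct.comm k F F) Δ = Δ

section Emb3
variable [CommSemiring k] [Ring F] [Algebra k F]

/-- The embedding `F⊗F → F^{⊗3}` placing the two legs in positions 1, 2. -/
noncomputable def emb12 : F ⊗[k] F →ₗ[k] F ⊗[k] (F ⊗[k] F) :=
  LinearMap.lTensor F ((TensorProduct.mk k F F).flip 1)

/-- The embedding `F⊗F → F^{⊗3}` placing the two legs in positions 2, 3. -/
noncomputable def emb23 : F ⊗[k] F →ₗ[k] F ⊗[k] (F ⊗[k] F) :=
  TensorProduct.mk k F (F ⊗[k] F) 1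

end Emb3

section BD
variable [Field k] [Ring F] [Algebra k F]

/-- The tensor power `F^{⊗d}` for `d = m + 2`. -/
abbrev TPow := ⨂[k] (_ : Fin (m + 2)), F

/-- `B^{⊗d} = F^{⊗d}[x₁,…,x_d]`, modelled as `F^{⊗d} ⊗ 𝕜[x₁,…,x_d]`. -/
abbrev BD := TPow k F m ⊗[k] MvPolynomial (Fin (m + 2)) k

/-- Insertion of `F` into the `j`-th tensor slot of `F^{⊗d}` (with `1` elsewhere). -/
noncomputable def ins (j : Fin (m + 2)) : F →ₗ[k] TPow k F m where
  toFun a := tprod k (Function.update (fun _ => (1 : F)) j a)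
  map_add' a b := by
    simpa using MultilinearMap.map_update_add (tprod k) (fun _ => (1 : F)) j a b
  map_smul' c a := by
    simpa using MultilinearMap.map_update_smul (tprod k) (fun _ => (1 : F)) j c a

/-- The placement of `Y ∈ F⊗F` with its legs in tensor slots `i` and `j` of `F^{⊗d}`. -/
noncomputable def place (i j : Fin (m + 2)) : F ⊗[k] F →ₗ[k] TPow k F m :=
  TensorProduct.lift
    ((LinearMap.mul k (TPow k F m)).compl₁₂ (ins k F m i) (ins k F m j))

/-- The place-permutation of the tensor slots `i, i+1` of `F^{⊗d}`. -/
noncomputable def sigmaT (i : Fin (m + 1)) : TPow k F m →ₗ[k] TPow k F m :=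
  (PiTensorProduct.reindex k (fun _ => F)
      (Equiv.swap i.castSucc i.succ)).toLinearMap

/-- The automorphism `σ_i` of `B^{⊗d}`: swaps the tensor slots `i, i+1` of `F^{⊗d}`
and the variables `x_i, x_{i+1}`. -/
noncomputable def sigmaB (i : Fin (m + 1)) : BD k F m →ₗ[k] BD k F m :=
  TensorProduct.map (sigmaT k F m i)
    (MvPolynomial.rename (⇑(Equiv.swap i.castSucc i.succ)) :
        MvPolynomial (Fin (m + 2)) k →ₐ[k] MvPolynomial (Fin (m + 2)) k).toLinearMap

/-- The variable `x_j` as an element of `B^{⊗d}`. -/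
noncomputable def xv (j : Fin (m + 2)) : BD k F m :=
  (1 : TPow k F m) ⊗ₜ[k] (X j : MvPolynomial (Fin (m + 2)) k)

variable (Δf : Fin 2 → Fin 2 → F ⊗[k] F) (Rv : F ⊗[k] F)

/-- `β_i ∈ B^{⊗d}`: `β` placed in slots `i, i+1` with variables `x_i, x_{i+1}`. -/
noncomputable def betaI (i : Fin (m + 1)) : BD k F m :=
  (place k F m i.castSucc i.succ (Δf 0 0)) ⊗ₜ[k] (1 : MvPolynomial (Fin (m + 2)) k)
    + (place k F m i.castSucc i.succ (Δf 1 0)) ⊗ₜ[k] (X i.castSucc)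
    + (place k F m i.castSucc i.succ (Δf 0 1)) ⊗ₜ[k] (X i.succ)
    + (place k F m i.castSucc i.succ (Δf 1 1)) ⊗ₜ[k] (X i.castSucc * X i.succ)

/-- `S_i ∈ B^{⊗d}`: `S = Δ¹⁰ − Δ⁰¹` placed in slots `i, i+1`. -/
noncomputable def SI (i : Fin (m + 1)) : BD k F m :=
  (place k F m i.castSucc i.succ (Δf 1 0 - Δf 0 1)) ⊗ₜ[k]
    (1 : MvPolynomial (Fin (m + 2)) k)

/-- `R_i ∈ B^{⊗d}`: `R` placed in slots `i, i+1`. -/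
noncomputable def RI (i : Fin (m + 1)) : BD k F m :=
  (place k F m i.castSucc i.succ Rv) ⊗ₜ[k] (1 : MvPolynomial (Fin (m + 2)) k)

end BD

/-- The defining relations of the quantum wreath product of polynomial type
`B ≀ H(d)`, `d = m+2`: the algebra structure of `B^{⊗d}`, the braid relations,
the quadratic relations and the wreath relations. -/
inductive QRel (k F : Type*) [Field k] [Ring F] [Algebra k F] (m : ℕ)
    (Δf : Fin 2 → Fin 2 → F ⊗[k] F) (Rv : F ⊗[k] F)
    (ρf : Fin (m + 1) → BD k F m →ₗ[k] BD k F m) :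
    FreeAlgebra k (BD k F m ⊕ Fin (m + 1)) →
      FreeAlgebra k (BD k F m ⊕ Fin (m + 1)) → Prop
  | add_gen (a b : BD k F m) :
      QRel k F m Δf Rv ρf
        (FreeAlgebra.ι k (Sum.inl a) + FreeAlgebra.ι k (Sum.inl b))
        (FreeAlgebra.ι k (Sum.inl (a + b)))
  | smul_gen (c : k) (a : BD k F m) :
      QRel k F m Δf Rv ρf (c • FreeAlgebra.ι k (Sum.inl a))
        (FreeAlgebra.ι k (Sum.inl (c • a)))
  | mul_gen (a b : BD k F m) :
      QRel k F m Δf Rv ρf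
        (FreeAlgebra.ι k (Sum.inl a) * FreeAlgebra.ι k (Sum.inl b))
        (FreeAlgebra.ι k (Sum.inl (a * b)))
  | one_gen :
      QRel k F m Δf Rv ρf (FreeAlgebra.ι k (Sum.inl (1 : BD k F m))) 1
  | braid_far (i j : Fin (m + 1)) (h : (i : ℕ) + 2 ≤ (j : ℕ) ∨ (j : ℕ) + 2 ≤ (i : ℕ)) :
      QRel k F m Δf Rv ρf
        (FreeAlgebra.ι k (Sum.inr i) * FreeAlgebra.ι k (Sum.inr j))
        (FreeAlgebra.ι k (Sum.inr j) * FreeAlgebra.ι k (Sum.inr i))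
  | braid (i j : Fin (m + 1)) (h : (i : ℕ) + 1 = (j : ℕ)) :
      QRel k F m Δf Rv ρf
        (FreeAlgebra.ι k (Sum.inr i) * FreeAlgebra.ι k (Sum.inr j) *
          FreeAlgebra.ι k (Sum.inr i))
        (FreeAlgebra.ι k (Sum.inr j) * FreeAlgebra.ι k (Sum.inr i) *
          FreeAlgebra.ι k (Sum.inr j))
  | quad (i : Fin (m + 1)) :
      QRel k F m Δf Rv ρf
        (FreeAlgebra.ι k (Sum.inr i) * FreeAlgebra.ι k (Sum.inr i))
        (FreeAlgebra.ι k (Sum.inl (SI k F m Δf i)) * FreeAlgebra.ι k (Sum.inr i)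
          + FreeAlgebra.ι k (Sum.inl (RI k F m Rv i)))
  | wreath (i : Fin (m + 1)) (b : BD k F m) :
      QRel k F m Δf Rv ρf
        (FreeAlgebra.ι k (Sum.inr i) * FreeAlgebra.ι k (Sum.inl b))
        (FreeAlgebra.ι k (Sum.inl (sigmaB k F m i b)) * FreeAlgebra.ι k (Sum.inr i)
          + FreeAlgebra.ι k (Sum.inl (ρf i b)))

section QWPdefs
variable [Field k] [Ring F] [Algebra k F]
variable (Δf : Fin 2 → Fin 2 → F ⊗[k] F) (Rv : F ⊗[k] F)
variable (ρf : Fin (m + 1) → BD k F m →ₗ[k] BD k F m)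

/-- The quantum wreath product of polynomial type, presented by generators and
relations. -/
abbrev QWP := RingQuot (QRel k F m Δf Rv ρf)

/-- The canonical map `B^{⊗d} → B ≀ H(d)`. -/
noncomputable def embB (b : BD k F m) : QWP k F m Δf Rv ρf :=
  RingQuot.mkAlgHom k (QRel k F m Δf Rv ρf) (FreeAlgebra.ι k (Sum.inl b))

/-- The Hecke-like generator `H_i ∈ B ≀ H(d)`. -/
noncomputable def genH (i : Fin (m + 1)) : QWP k F m Δf Rv ρf :=
  RingQuot.mkAlgHom k (QRel k F m Δf Rv ρf) (FreeAlgebra.ι k (Sum.inr i))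

/-- The simple transposition `s_i = (i, i+1) ∈ S_d`, `d = m+2`. -/
def swPerm (i : Fin (m + 1)) : Equiv.Perm (Fin (m + 2)) :=
  Equiv.swap i.castSucc i.succ

/-- The number of inversions (Coxeter length) of a permutation. -/
noncomputable def invCount (w : Equiv.Perm (Fin (m + 2))) : ℕ :=
  (Finset.univ.filter fun p : Fin (m + 2) × Fin (m + 2) =>
    p.1 < p.2 ∧ w p.2 < w p.1).card

/-- `L` is a reduced expression for `w`. -/
def IsReducedWord (L : List (Fin (m + 1))) (w : Equiv.Perm (Fin (m + 2))) : Prop :=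
  (L.map (swPerm m)).prod = w ∧ L.length = invCount m w

end QWPdefs

section Tensorspace
variable [Field k] [Ring F] [Algebra k F] (n : ℕ)
variable (Δf : Fin 2 → Fin 2 → F ⊗[k] F) (αv Rv : F ⊗[k] F)
variable (ρf : Fin (m + 1) → BD k F m →ₗ[k] BD k F m)

/-- The tensor space `V_n^{⊗d} = ⊕_{i ∈ {1,…,n}^d} v_i·B^{⊗d}`, modelled as
finitely supported `B^{⊗d}`-valued functions on the index tuples. -/
abbrev TSp := (Fin (m + 2) → Fin n) →₀ BD k F m

/-- Right multiplication by `b ∈ B^{⊗d}` on the tensor space (factorwise action). -/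
noncomputable def mulBy (b : BD k F m) : TSp k F m n → TSp k F m n :=
  fun v => v.mapRange (· * b) (zero_mul b)

/-- `ᾱ_k ∈ B^{⊗d}`: `ᾱ = σ(α) + S` placed in slots `k, k+1`. -/
noncomputable def abarI (i : Fin (m + 1)) : BD k F m :=
  (place k F m i.castSucc i.succ
      ((Algebra.TensorProduct.comm k F F) αv + (Δf 1 0 - Δf 0 1))) ⊗ₜ[k]
    (1 : MvPolynomial (Fin (m + 2)) k)

/-- The right action of the Hecke-like generator `H_k` on the tensor space. -/
noncomputable def Hop (i : Fin (m + 1)) : TSp k F m n → TSp k F m n :=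
  fun v => v.sum fun idx b =>
    if idx i.castSucc < idx i.succ then
      Finsupp.single (fun j => idx ((Equiv.swap i.castSucc i.succ) j))
          (sigmaB k F m i b)
        + Finsupp.single idx (ρf i b)
    else if idx i.castSucc = idx i.succ then
      Finsupp.single idx (abarI k F m Δf αv i * sigmaB k F m i b)
        + Finsupp.single idx (ρf i b)
    else
      Finsupp.single (fun j => idx ((Equiv.swap i.castSucc i.succ) j))
          (RI k F m Rv i * sigmaB k F m i b)
        + Finsupp.single idx (ρf i b + SI k F m Δf i * sigmaB k F m i b)

end Tensorspace


section C3
variable [Field k] [Ring F] [Algebra k F]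

/-- The polynomial ring `(F⊗F)[x₁,x₂]`, modelled as `(F⊗F) ⊗ 𝕜[x₁,x₂]`. -/
abbrev PolyFF := (F ⊗[k] F) ⊗[k] MvPolynomial (Fin 2) k

/-- The element `P = α·(x₁−x₂) + β` of `(F⊗F)[x₁,x₂]`. -/
noncomputable def Pel (Δf : Fin 2 → Fin 2 → F ⊗[k] F) (αv : F ⊗[k] F) : PolyFF k F :=
  αv ⊗ₜ[k] ((X (0 : Fin 2) : MvPolynomial (Fin 2) k) - X 1)
    + Δf 0 0 ⊗ₜ[k] (1 : MvPolynomial (Fin 2) k)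
    + Δf 1 0 ⊗ₜ[k] (X (0 : Fin 2) : MvPolynomial (Fin 2) k)
    + Δf 0 1 ⊗ₜ[k] (X (1 : Fin 2) : MvPolynomial (Fin 2) k)
    + Δf 1 1 ⊗ₜ[k] ((X (0 : Fin 2) : MvPolynomial (Fin 2) k) * X 1)

end C3

section Helpers16

def gM (m : ℕ) (w : Equiv.Perm (Fin (m + 2))) : ℕ :=
  ∑ j : Fin (m + 2), (j : ℕ) * ((Fin.rev (w j) : Fin (m + 2)) : ℕ)

lemma gM_lt (m : ℕ) (w : Equiv.Perm (Fin (m + 2))) (i : Fin (m + 1))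
    (h : w i.succ < w i.castSucc) : gM m (w * swPerm m i) < gM m w := by
  unfold gM
  have hne : i.castSucc ≠ i.succ := (Fin.castSucc_lt_succ).ne
  have key : ∀ f : Fin (m + 2) → ℕ, ∑ j, f j =
      (f i.castSucc + f i.succ) + ∑ j ∈ Finset.univ \ {i.castSucc, i.succ}, f j := by
    intro f
    rw [← Finset.sum_pair hne, add_comm (∑ x ∈ _, f x), Finset.sum_sdiff (Finset.subset_univ _)]
  rw [key, key (fun j => (j : ℕ) * ((Fin.rev (w j) : Fin (m + 2)) : ℕ))]
  have e : ∑ j ∈ Finset.univ \ {i.castSucc, i.succ},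
      (j : ℕ) * ((Fin.rev ((w * swPerm m i) j) : Fin (m + 2)) : ℕ) =
      ∑ j ∈ Finset.univ \ {i.castSucc, i.succ},
      (j : ℕ) * ((Fin.rev (w j) : Fin (m + 2)) : ℕ) := by
    refine Finset.sum_congr rfl fun j hj => ?_
    simp only [Finset.mem_sdiff, Finset.mem_insert, Finset.mem_singleton, not_or] at hj
    simp only [swPerm, Equiv.Perm.mul_apply, Equiv.swap_apply_of_ne_of_ne hj.2.1 hj.2.2]
  rw [e]
  simp only [swPerm, Equiv.Perm.mul_apply, Equiv.swap_apply_left, Equiv.swap_apply_right]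
  have h2 : (Fin.rev (w i.castSucc) : Fin (m+2)) < Fin.rev (w i.succ) := Fin.rev_lt_rev.2 h
  have h3 : ((Fin.rev (w i.castSucc) : Fin (m+2)) : ℕ) < (Fin.rev (w i.succ) : Fin (m+2)) := h2
  simp only [Fin.val_castSucc, Fin.val_succ]
  nlinarith

open Classical in
noncomputable def hF {A : Type*} [Monoid A] (m : ℕ) (H : Fin (m + 1) → A)
    (w : Equiv.Perm (Fin (m + 2))) : A :=
  if hw : ∃ i : Fin (m + 1), w i.succ < w i.castSucc then
    hF m H (w * swPerm m (Classical.choose hw)) * H (Classical.choose hw) else 1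
termination_by gM m w
decreasing_by exact gM_lt m w _ (Classical.choose_spec hw)

lemma hF_one {A : Type*} [Monoid A] (m : ℕ) (H : Fin (m + 1) → A) : hF m H 1 = 1 := by
  rw [hF, dif_neg]
  rintro ⟨i, hi⟩
  exact absurd hi (by simpa using (Fin.castSucc_lt_succ (i := i)).le)

lemma hF_step {A : Type*} [Monoid A] (m : ℕ) (H : Fin (m + 1) → A)
    (hfar : ∀ i j : Fin (m + 1), ((i : ℕ) + 2 ≤ (j : ℕ) ∨ (j : ℕ) + 2 ≤ (i : ℕ)) →
      H i * H j = H j * H i)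
    (hbr : ∀ i j : Fin (m + 1), (i : ℕ) + 1 = (j : ℕ) →
      H i * H j * H i = H j * H i * H j) :
    ∀ (N : ℕ) (w : Equiv.Perm (Fin (m + 2))), gM m w < N → ∀ i : Fin (m + 1),
      w i.succ < w i.castSucc → hF m H w = hF m H (w * swPerm m i) * H i := by
  intro N
  induction N with
  | zero => intro w h; omega
  | succ N ih =>
    intro w hN i hi
    have hw : ∃ i : Fin (m + 1), w i.succ < w i.castSucc := ⟨i, hi⟩
    rw [hF, dif_pos hw]
    have hj := Classical.choose_spec hw
    generalize Classical.choose hw = j at hj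
    have main : ∀ i j : Fin (m + 1), (i : ℕ) + 1 = (j : ℕ) → w i.succ < w i.castSucc →
        w j.succ < w j.castSucc →
        hF m H (w * swPerm m j) * H j = hF m H (w * swPerm m i) * H i := by
      intro i j hij hi hj
      have hb : i.succ = j.castSucc := Fin.ext (by simpa using hij)
      have hca : i.castSucc ≠ j.succ := fun h => by
        have := congrArg Fin.val h; simp at this; omega
      have hab : i.castSucc ≠ j.castSucc := fun h => by
        have := congrArg Fin.val h; simp at this; omega
      have hbc : j.castSucc ≠ j.succ := (Fin.castSucc_lt_succ).ne
      have l1 := gM_lt m w i hi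
      have l2 := gM_lt m w j hj
      rw [hb] at hi
      have d1 : (w * swPerm m j) i.succ < (w * swPerm m j) i.castSucc := by
        simp only [swPerm, Equiv.Perm.mul_apply, hb, Equiv.swap_apply_left,
          Equiv.swap_apply_of_ne_of_ne hab hca]
        exact hj.trans hi
      have d2 : (w * swPerm m i) j.succ < (w * swPerm m i) j.castSucc := by
        simp only [swPerm, Equiv.Perm.mul_apply, hb, Equiv.swap_apply_right,
          Equiv.swap_apply_of_ne_of_ne hca.symm hbc.symm]
        exact hj.trans hi
      have l3 := gM_lt m _ i d1
      have l4 := gM_lt m _ j d2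
      have d3 : (w * swPerm m j * swPerm m i) j.succ < (w * swPerm m j * swPerm m i) j.castSucc := by
        simp only [swPerm, Equiv.Perm.mul_apply, hb, Equiv.swap_apply_right,
          Equiv.swap_apply_of_ne_of_ne hca.symm hbc.symm,
          Equiv.swap_apply_of_ne_of_ne hab hca]
        exact hi
      have d4 : (w * swPerm m i * swPerm m j) i.succ < (w * swPerm m i * swPerm m j) i.castSucc := by
        simp only [swPerm, Equiv.Perm.mul_apply, hb, Equiv.swap_apply_left,
          Equiv.swap_apply_of_ne_of_ne hca.symm hbc.symm,
          Equiv.swap_apply_of_ne_of_ne hab hca]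
        exact hj
      rw [ih _ (by omega) i d1, ih _ (by omega) j d2, ih _ (by omega) j d3,
        ih _ (by omega) i d4]
      have pb : w * swPerm m j * swPerm m i * swPerm m j =
          w * swPerm m i * swPerm m j * swPerm m i := by
        simp only [mul_assoc]
        congr 1
        simp only [swPerm, hb]
        have e1 := Equiv.swap_mul_swap_mul_swap (x := i.castSucc) (y := j.castSucc)
          (z := j.succ) hab hca
        have e2 := Equiv.swap_mul_swap_mul_swap (x := j.succ) (y := j.castSucc)
          (z := i.castSucc) hbc.symm hca.symm
        simp only [mul_assoc, Equiv.swap_comm j.castSucc i.castSucc,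
          Equiv.swap_comm j.succ j.castSucc, Equiv.swap_comm j.succ i.castSucc] at e1 e2
        rw [e1, e2]
      rw [pb]
      have := hbr i j hij
      simp only [mul_assoc] at this ⊢
      rw [this]
    have mfar : ∀ i j : Fin (m + 1), (i : ℕ) + 2 ≤ (j : ℕ) → w i.succ < w i.castSucc →
        w j.succ < w j.castSucc →
        hF m H (w * swPerm m j) * H j = hF m H (w * swPerm m i) * H i := by
      intro i j hij hi hj
      have n1 : i.castSucc ≠ j.castSucc := fun h => by
        have := congrArg Fin.val h; simp at this; omega
      have n2 : i.castSucc ≠ j.succ := fun h => by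
        have := congrArg Fin.val h; simp at this; omega
      have n3 : i.succ ≠ j.castSucc := fun h => by
        have := congrArg Fin.val h; simp at this; omega
      have n4 : i.succ ≠ j.succ := fun h => by
        have := congrArg Fin.val h; simp at this; omega
      have l1 := gM_lt m w i hi
      have l2 := gM_lt m w j hj
      have d1 : (w * swPerm m j) i.succ < (w * swPerm m j) i.castSucc := by
        simp only [swPerm, Equiv.Perm.mul_apply, Equiv.swap_apply_of_ne_of_ne n1 n2,
          Equiv.swap_apply_of_ne_of_ne n3 n4]
        exact hi
      have d2 : (w * swPerm m i) j.succ < (w * swPerm m i) j.castSucc := by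
        simp only [swPerm, Equiv.Perm.mul_apply, Equiv.swap_apply_of_ne_of_ne n1.symm n3.symm,
          Equiv.swap_apply_of_ne_of_ne n2.symm n4.symm]
        exact hj
      rw [ih _ (by omega) i d1, ih _ (by omega) j d2]
      have pb : swPerm m j * swPerm m i = swPerm m i * swPerm m j := by
        ext x
        simp only [swPerm, Equiv.Perm.mul_apply]
        congr 1
        simp only [Equiv.swap_apply_def]
        split_ifs <;> simp_all
      have := hfar i j (Or.inl hij)
      simp only [mul_assoc, pb, this]
    rcases Nat.lt_trichotomy (i : ℕ) (j : ℕ) with h | h | h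
    · by_cases hadj : (i : ℕ) + 1 = j
      · exact main i j hadj hi hj
      · exact mfar i j (by omega) hi hj
    · rw [Fin.ext h]
    · by_cases hadj : (j : ℕ) + 1 = i
      · exact (main j i hadj hj hi).symm
      · exact (mfar j i (by omega) hj hi).symm


lemma sigmaB_invol {k F : Type*} [Field k] [Ring F] [Algebra k F] (m : ℕ) (i : Fin (m + 1))
    (b : BD k F m) : sigmaB k F m i (sigmaB k F m i b) = b := by
  induction b using TensorProduct.induction_on with
  | zero => simp
  | add x y hx hy => rw [map_add, map_add, hx, hy]
  | tmul t p =>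
    simp only [sigmaB, TensorProduct.map_tmul]
    congr 1
    · simp only [sigmaT, LinearEquiv.coe_coe]
      induction t using PiTensorProduct.induction_on with
      | smul_tprod r f =>
        simp only [map_smul, PiTensorProduct.reindex_tprod]
        congr 2
        ext j
        simp only [Equiv.symm_swap]
        exact congrArg f (Equiv.swap_apply_self _ _ j)
      | add x y hx hy => rw [map_add, map_add, hx, hy]
    · simp only [AlgHom.toLinearMap_apply, MvPolynomial.rename_rename]
      have : (⇑(Equiv.swap i.castSucc i.succ) ∘ ⇑(Equiv.swap i.castSucc i.succ)) = id := by
        ext j; simp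
      rw [this, MvPolynomial.rename_id_apply]

lemma sigmaB_one {k F : Type*} [Field k] [Ring F] [Algebra k F] (m : ℕ) (i : Fin (m + 1)) :
    sigmaB k F m i (1 : BD k F m) = 1 := by
  rw [Algebra.TensorProduct.one_def, sigmaB, TensorProduct.map_tmul]
  congr 1
  · simp only [sigmaT, LinearEquiv.coe_coe, PiTensorProduct.one_def, PiTensorProduct.reindex_tprod]
    rfl
  · simp

/-- Evaluation of the Hecke generator on a single tensor. -/
lemma Hop_single {k F : Type*} [Field k] [Ring F] [Algebra k F] (m n : ℕ)
    (Δf : Fin 2 → Fin 2 → F ⊗[k] F) (αv Rv : F ⊗[k] F)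
    (ρf : Fin (m + 1) → BD k F m →ₗ[k] BD k F m) (i : Fin (m + 1))
    (idx : Fin (m + 2) → Fin n) (b : BD k F m) :
    Hop k F m n Δf αv Rv ρf i (Finsupp.single idx b) =
    if idx i.castSucc < idx i.succ then
      Finsupp.single (fun j => idx ((Equiv.swap i.castSucc i.succ) j))
          (sigmaB k F m i b)
        + Finsupp.single idx (ρf i b)
    else if idx i.castSucc = idx i.succ then
      Finsupp.single idx (abarI k F m Δf αv i * sigmaB k F m i b)
        + Finsupp.single idx (ρf i b)
    else
      Finsupp.single (fun j => idx ((Equiv.swap i.castSucc i.succ) j))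
          (RI k F m Rv i * sigmaB k F m i b)
        + Finsupp.single idx (ρf i b + SI k F m Δf i * sigmaB k F m i b) := by
  rw [Hop, Finsupp.sum_single_index]
  split_ifs <;> simp

lemma mulBy_single {k F : Type*} [Field k] [Ring F] [Algebra k F] (m n : ℕ)
    (idx : Fin (m + 2) → Fin n) (b c : BD k F m) :
    mulBy k F m n c (Finsupp.single idx b) = Finsupp.single idx (b * c) := by
  rw [mulBy, Finsupp.mapRange_single]

end Helpers16
/-- **Schur duality for the wreath Schur algebra.**  If `n ≥ d` then the action map
`B ≀ H(d) → End_𝕜(V_n^{⊗d})` is injective and its image is exactly the centralizer of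
the wreath Schur algebra `S_{n,d} = End_{B≀H(d)}(V_n^{⊗d})`. -/
theorem stmt16 [Field k] [Ring F] [Algebra k F] [FiniteDimensional k F] (n : ℕ)
    (hn : m + 2 ≤ n)
    (Δf : Fin 2 → Fin 2 → F ⊗[k] F)
    (hwf : ∀ i j, IsWeakFrobenius k F (Δf i j))
    (hsym : ∀ i j, IsSymmEl k F (Δf i j))
    (hA2 : emb12 k F (Δf 0 0) * emb23 k F (Δf 1 1) =
      emb12 k F (Δf 0 1) * emb23 k F (Δf 1 0))
    (Rv : F ⊗[k] F) (hRc : ∀ z, Rv * z = z * Rv) (hRs : IsSymmEl k F Rv)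
    -- (C1): `α·(σ(α)+S) = R`
    (αv : F ⊗[k] F)
    (hC1 : αv * ((Algebra.TensorProduct.comm k F F) αv + (Δf 1 0 - Δf 0 1)) = Rv)
    -- (C2): `α` and each `Δ^{ij}` are central in `F⊗F`
    (hαc : ∀ z, αv * z = z * αv)
    (hΔc : ∀ i j z, Δf i j * z = z * Δf i j)
    -- (C3): `P = α·(x₁−x₂) + β` is not a zero divisor in `(F⊗F)[x₁,x₂]`
    (hC3 : ∀ z : PolyFF k F,
      (Pel k F Δf αv * z = 0 → z = 0) ∧ (z * Pel k F Δf αv = 0 → z = 0))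
    (ρf : Fin (m + 1) → BD k F m →ₗ[k] BD k F m)
    (hρ : ∀ (i : Fin (m + 1)) (a : BD k F m),
      (xv k F m i.castSucc - xv k F m i.succ) * ρf i a =
        betaI k F m Δf i * a - sigmaB k F m i a * betaI k F m Δf i)
    -- the right action of `B ≀ H(d)` on the tensor space `V_n^{⊗d}`
    (act : QWP k F m Δf Rv ρf → (TSp k F m n →ₗ[k] TSp k F m n))
    (hact_one : act 1 = LinearMap.id)
    (hact_mul : ∀ x y, act (x * y) = (act y).comp (act x))
    (hact_add : ∀ x y, act (x + y) = act x + act y)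
    (hact_smul : ∀ (c : k) x, act (c • x) = c • act x)
    (hact_emb : ∀ (b : BD k F m) (v : TSp k F m n),
      act (embB k F m Δf Rv ρf b) v = mulBy k F m n b v)
    (hact_H : ∀ (i : Fin (m + 1)) (v : TSp k F m n),
      act (genH k F m Δf Rv ρf i) v = Hop k F m n Δf αv Rv ρf i v) :
    -- the action map is injective,
    Function.Injective act ∧
    -- and its image is exactly the set of 𝕜-linear endomorphisms commuting with
    -- every element of the wreath Schur algebra `S_{n,d} = End_{B≀H(d)}(V_n^{⊗d})`
    (∀ ψ : TSp k F m n →ₗ[k] TSp k F m n,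
      (∀ φ : TSp k F m n →ₗ[k] TSp k F m n,
        (∀ x : QWP k F m Δf Rv ρf, φ.comp (act x) = (act x).comp φ) →
        ψ.comp φ = φ.comp ψ) ↔ ∃ x : QWP k F m Δf Rv ρf, ψ = act x) := by
  classical
  -- structure of the embedding
  have eadd : ∀ a b, embB k F m Δf Rv ρf (a + b) = embB k F m Δf Rv ρf a + embB k F m Δf Rv ρf b := by
    intro a b
    have := RingQuot.mkAlgHom_rel k (QRel.add_gen (Δf := Δf) (Rv := Rv) (ρf := ρf) a b)
    rw [map_add] at this
    exact this.symm
  have esmul : ∀ (c : k) a, embB k F m Δf Rv ρf (c • a) = c • embB k F m Δf Rv ρf a := by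
    intro c a
    have := RingQuot.mkAlgHom_rel k (QRel.smul_gen (Δf := Δf) (Rv := Rv) (ρf := ρf) c a)
    rw [map_smul] at this
    exact this.symm
  have emul : ∀ a b, embB k F m Δf Rv ρf (a * b) = embB k F m Δf Rv ρf a * embB k F m Δf Rv ρf b := by
    intro a b
    have := RingQuot.mkAlgHom_rel k (QRel.mul_gen (Δf := Δf) (Rv := Rv) (ρf := ρf) a b)
    rw [map_mul] at this
    exact this.symm
  have eone : embB k F m Δf Rv ρf 1 = 1 := by
    have := RingQuot.mkAlgHom_rel k (QRel.one_gen (Δf := Δf) (Rv := Rv) (ρf := ρf))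
    rw [map_one] at this
    exact this
  have hfar : ∀ i j : Fin (m + 1), ((i : ℕ) + 2 ≤ (j : ℕ) ∨ (j : ℕ) + 2 ≤ (i : ℕ)) →
      genH k F m Δf Rv ρf i * genH k F m Δf Rv ρf j =
        genH k F m Δf Rv ρf j * genH k F m Δf Rv ρf i := by
    intro i j h
    have := RingQuot.mkAlgHom_rel k (QRel.braid_far (Δf := Δf) (Rv := Rv) (ρf := ρf) i j h)
    simp only [map_mul] at this
    exact this
  have hbr : ∀ i j : Fin (m + 1), (i : ℕ) + 1 = (j : ℕ) →
      genH k F m Δf Rv ρf i * genH k F m Δf Rv ρf j * genH k F m Δf Rv ρf i =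
        genH k F m Δf Rv ρf j * genH k F m Δf Rv ρf i * genH k F m Δf Rv ρf j := by
    intro i j h
    have := RingQuot.mkAlgHom_rel k (QRel.braid (Δf := Δf) (Rv := Rv) (ρf := ρf) i j h)
    simp only [map_mul] at this
    exact this
  have hquad : ∀ i, genH k F m Δf Rv ρf i * genH k F m Δf Rv ρf i =
      embB k F m Δf Rv ρf (SI k F m Δf i) * genH k F m Δf Rv ρf i
        + embB k F m Δf Rv ρf (RI k F m Rv i) := by
    intro i
    have := RingQuot.mkAlgHom_rel k (QRel.quad (Δf := Δf) (Rv := Rv) (ρf := ρf) i)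
    simp only [map_mul, map_add] at this
    exact this
  have hwr : ∀ i b, genH k F m Δf Rv ρf i * embB k F m Δf Rv ρf b =
      embB k F m Δf Rv ρf (sigmaB k F m i b) * genH k F m Δf Rv ρf i
        + embB k F m Δf Rv ρf (ρf i b) := by
    intro i b
    have := RingQuot.mkAlgHom_rel k (QRel.wreath (Δf := Δf) (Rv := Rv) (ρf := ρf) i b)
    simp only [map_mul, map_add] at this
    exact this
  -- the orbit of the strictly increasing tuple
  set io : Equiv.Perm (Fin (m + 2)) → (Fin (m + 2) → Fin n) :=
    fun w j => Fin.castLE hn (w j) with hio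
  have io_inj : Function.Injective io := by
    intro w w2 h
    ext j
    have := congrFun h j
    simpa [hio, Fin.ext_iff] using this
  have io_sw : ∀ w i, (fun j => io w ((Equiv.swap (Fin.castSucc i) i.succ) j)) =
      io (w * swPerm m i) := fun w i => rfl
  have sw_sw : ∀ (w : Equiv.Perm (Fin (m + 2))) i, w * swPerm m i * swPerm m i = w := by
    intro w i
    rw [mul_assoc, swPerm, Equiv.swap_mul_self, mul_one]
  have sw_ne : ∀ (w : Equiv.Perm (Fin (m + 2))) i, w * swPerm m i ≠ w := by
    intro w i h
    have h2 := congrArg (fun u : Equiv.Perm (Fin (m + 2)) => u i.castSucc) h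
    simp only [swPerm, Equiv.Perm.mul_apply, Equiv.swap_apply_left] at h2
    exact (Fin.castSucc_lt_succ (i := i)).ne' (w.injective h2)
  -- action of generators on the base vector
  have asc1 : ∀ i : Fin (m + 1), io 1 i.castSucc < io 1 i.succ := by
    intro i
    simp [hio, Fin.lt_def]
  have Hup : ∀ i b, Hop k F m n Δf αv Rv ρf i (Finsupp.single (io 1) b) =
      Finsupp.single (io (1 * swPerm m i)) (sigmaB k F m i b)
        + Finsupp.single (io 1) (ρf i b) := by
    intro i b
    rw [Hop_single, if_pos (asc1 i), io_sw]
  have sep : ∀ i a b c d, Finsupp.single (io (1 * swPerm m i)) a + Finsupp.single (io 1) b =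
      Finsupp.single (io (1 * swPerm m i)) c + (Finsupp.single (io 1) d : TSp k F m n) →
      a = c ∧ b = d := by
    intro i a b c d h
    have hne : io (1 * swPerm m i) ≠ io 1 := fun h => sw_ne 1 i (io_inj h)
    constructor
    · have := DFunLike.congr_fun h (io (1 * swPerm m i))
      simpa only [Finsupp.add_apply, Finsupp.single_apply, if_neg hne, if_neg hne.symm, if_true,
        add_zero, zero_add] using this
    · have := DFunLike.congr_fun h (io 1)
      simpa only [Finsupp.add_apply, Finsupp.single_apply, if_neg hne, if_neg hne.symm, if_true,
        add_zero, zero_add] using this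
  have rho1 : ∀ i, ρf i 1 = 0 := by
    intro i
    have h := hwr i 1
    rw [sigmaB_one, eone, mul_one, one_mul] at h
    have h0 : embB k F m Δf Rv ρf (ρf i 1) = 0 := by simpa using h.symm
    have hz : act 0 = 0 := by simpa using hact_smul 0 0
    have h1 := hact_emb (ρf i 1) (Finsupp.single (io 1) 1)
    rw [h0, hz, mulBy_single, one_mul] at h1
    simpa using h1.symm
  have rhosig : ∀ i b, ρf i (sigmaB k F m i b) = - ρf i b := by
    intro i b
    have h := congrArg (fun x => act x (Finsupp.single (io 1) 1)) (hwr i b)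
    simp only [hact_mul, hact_add, LinearMap.comp_apply, LinearMap.add_apply, hact_emb, hact_H,
      Hup, mulBy_single, rho1, sigmaB_one, Finsupp.single_zero, add_zero, one_mul,
      sigmaB_invol, add_assoc, ← Finsupp.single_add] at h
    have hsep := sep i b 0 b (ρf i (sigmaB k F m i b) + ρf i b) (by simpa using h)
    exact eq_neg_of_add_eq_zero_left hsep.2.symm
  have hS : ∀ i, sigmaB k F m i (SI k F m Δf i) = SI k F m Δf i ∧ ρf i (SI k F m Δf i) = 0 := by
    intro i
    have h := congrArg (fun x => act x (Finsupp.single (io 1) 1)) (hquad i)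
    have hd1 : ¬ io (1 * swPerm m i) i.castSucc < io (1 * swPerm m i) i.succ := by
      simp [hio, Fin.lt_def, swPerm]
    have hd2 : ¬ io (1 * swPerm m i) i.castSucc = io (1 * swPerm m i) i.succ := by
      simp [hio, Fin.ext_iff, swPerm]
    simp only [hact_mul, hact_add, LinearMap.comp_apply, LinearMap.add_apply, hact_emb, hact_H,
      Hup, mulBy_single, rho1, sigmaB_one, Finsupp.single_zero, add_zero,
      one_mul (1 : BD k F m), one_mul (SI k F m Δf i), one_mul (RI k F m Rv i)] at h
    rw [Hop_single, if_neg hd1, if_neg hd2, io_sw, sw_sw, sigmaB_one, rho1, zero_add, mul_one,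
      mul_one, add_assoc (Finsupp.single (io (1 * swPerm m i)) _), ← Finsupp.single_add,
      add_comm (Finsupp.single (io 1) (RI k F m Rv i)) _] at h
    have hsep := sep i _ _ _ _ h
    refine ⟨hsep.1.symm, ?_⟩
    simpa using hsep.2.symm
  -- rewriting rules
  have swap1 : ∀ i b, embB k F m Δf Rv ρf b * genH k F m Δf Rv ρf i =
      genH k F m Δf Rv ρf i * embB k F m Δf Rv ρf (sigmaB k F m i b)
        + embB k F m Δf Rv ρf (ρf i b) := by
    intro i b
    rw [hwr, sigmaB_invol, add_assoc, ← eadd, rhosig, neg_add_cancel]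
    have : embB k F m Δf Rv ρf 0 = 0 := by simpa using esmul 0 0
    rw [this, add_zero]
  have e0 : embB k F m Δf Rv ρf 0 = 0 := by simpa using esmul 0 0
  set h : Equiv.Perm (Fin (m + 2)) → QWP k F m Δf Rv ρf := hF m (genH k F m Δf Rv ρf) with hh
  have hstep : ∀ w (i : Fin (m + 1)), w i.succ < w i.castSucc →
      h w = h (w * swPerm m i) * genH k F m Δf Rv ρf i :=
    fun w i hi => hF_step m _ hfar hbr (gM m w + 1) w (Nat.lt_succ_self _) i hi
  let G : TSp k F m n →ₗ[k] QWP k F m Δf Rv ρf :=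
    { toFun := fun u => ∑ w, h w * embB k F m Δf Rv ρf (u (io w))
      map_add' := by
        intro u v
        simp only [Finsupp.add_apply, eadd, mul_add, Finset.sum_add_distrib]
      map_smul' := by
        intro c u
        simp only [Finsupp.smul_apply, esmul, mul_smul_comm, Finset.smul_sum, RingHom.id_apply] }
  have Gdef : ∀ u, G u = ∑ w, h w * embB k F m Δf Rv ρf (u (io w)) := fun u => rfl
  have Gs : ∀ w b, G (Finsupp.single (io w) b) = h w * embB k F m Δf Rv ρf b := by
    intro w b
    rw [Gdef, Finset.sum_eq_single w]
    · simp
    · intro w2 _ hwne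
      rw [Finsupp.single_apply, if_neg (fun h => hwne (io_inj h).symm), e0, mul_zero]
    · simp
  have Gn : ∀ idx b, (∀ w, io w ≠ idx) → G (Finsupp.single idx b) = 0 := by
    intro idx b hidx
    rw [Gdef]
    refine Finset.sum_eq_zero fun w _ => ?_
    rw [Finsupp.single_apply, if_neg (fun h => hidx w h.symm), e0, mul_zero]
  have GB : ∀ b u, G (act (embB k F m Δf Rv ρf b) u) = G u * embB k F m Δf Rv ρf b := by
    intro b u
    rw [hact_emb, Gdef, Gdef, Finset.sum_mul]
    refine Finset.sum_congr rfl fun w _ => ?_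
    rw [mulBy, Finsupp.mapRange_apply, emul, mul_assoc]
  have GH : ∀ i u, G (act (genH k F m Δf Rv ρf i) u) = G u * genH k F m Δf Rv ρf i := by
    intro i u
    induction u using Finsupp.induction_linear with
    | zero => simp
    | add u v hu hv => rw [map_add, map_add, map_add, hu, hv, add_mul]
    | single idx b =>
      rw [hact_H, Hop_single]
      by_cases hidx : ∃ w, io w = idx
      · obtain ⟨w, rfl⟩ := hidx
        rw [io_sw]
        have hlt : io w i.castSucc < io w i.succ ↔ w i.castSucc < w i.succ := Iff.rfl
        have heq : io w i.castSucc ≠ io w i.succ := by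
          intro hc
          have : w i.castSucc = w i.succ := by
            have := congrArg Fin.val hc
            exact Fin.ext this
          exact (Fin.castSucc_lt_succ (i := i)).ne (w.injective this)
        rw [if_neg heq, Gs, mul_assoc, swap1, mul_add, ← mul_assoc]
        split_ifs with hc
        · rw [map_add, Gs, Gs, hstep (w * swPerm m i) i, sw_sw]
          simpa [swPerm] using hlt.1 hc
        · have hd : w i.succ < w i.castSucc := by
            rcases lt_trichotomy (w i.castSucc) (w i.succ) with h1 | h1 | h1
            · exact absurd (hlt.2 h1) hc
            · exact absurd (w.injective h1) (Fin.castSucc_lt_succ (i := i)).ne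
            · exact h1
          have hwH : h w * genH k F m Δf Rv ρf i =
              h w * embB k F m Δf Rv ρf (SI k F m Δf i)
                + h (w * swPerm m i) * embB k F m Δf Rv ρf (RI k F m Rv i) := by
            rw [hstep w i hd, mul_assoc, hquad, swap1, (hS i).1, (hS i).2, e0, add_zero, mul_add,
              mul_assoc]
          rw [hwH, map_add, Gs, Gs, eadd, emul, emul, add_mul, mul_add, mul_assoc, mul_assoc]
          abel
      · push Not at hidx
        have hidx2 : ∀ w, io w ≠ fun j => idx ((Equiv.swap i.castSucc i.succ) j) := by
          intro w hw
          apply hidx (w * swPerm m i)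
          rw [← io_sw, hw]
          ext j
          simp
        rw [Gn idx b hidx, zero_mul]
        split_ifs <;> rw [map_add, Gn _ _ (by assumption), Gn _ _ hidx, add_zero]
  have Gx : ∀ x u, G (act x u) = G u * x := by
    intro x
    obtain ⟨y, rfl⟩ := RingQuot.mkAlgHom_surjective k (QRel k F m Δf Rv ρf) x
    induction y using FreeAlgebra.induction with
    | grade0 c =>
      intro u
      rw [AlgHom.commutes, Algebra.algebraMap_eq_smul_one, hact_smul, hact_one]
      simp
    | grade1 g =>
      rcases g with b | i
      · exact GB b
      · exact GH i
    | mul a b ha hb =>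
      intro u
      rw [map_mul, hact_mul, LinearMap.comp_apply, hb, ha, mul_assoc]
    | add a b ha hb =>
      intro u
      rw [map_add, hact_add, LinearMap.add_apply, map_add, ha, hb, mul_add]
  have G1 : G (Finsupp.single (io 1) 1) = 1 := by
    rw [Gs, eone, mul_one, hh, hF_one]
  refine ⟨?_, ?_⟩
  · intro x y hxy
    have h1 := Gx x (Finsupp.single (io 1) 1)
    rw [hxy, Gx, G1, one_mul, one_mul] at h1
    exact h1.symm
  · intro ψ
    constructor
    · intro hψ
      refine ⟨G (ψ (Finsupp.single (io 1) 1)), ?_⟩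
      refine LinearMap.ext fun v => ?_
      let f : TSp k F m n →ₗ[k] TSp k F m n :=
        { toFun := fun u => act (G u) v
          map_add' := by
            intro a b
            rw [map_add, hact_add, LinearMap.add_apply]
          map_smul' := by
            intro c a
            rw [map_smul, hact_smul, LinearMap.smul_apply, RingHom.id_apply] }
      have fdef : ∀ u, f u = act (G u) v := fun u => rfl
      have hf := hψ f (by
        intro x
        refine LinearMap.ext fun u => ?_
        rw [LinearMap.comp_apply, LinearMap.comp_apply, fdef, fdef, Gx, hact_mul,
          LinearMap.comp_apply])
      have h2 := LinearMap.congr_fun hf (Finsupp.single (io 1) 1)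
      rw [LinearMap.comp_apply, LinearMap.comp_apply, fdef, fdef, G1, hact_one] at h2
      exact h2
    · rintro ⟨x, rfl⟩ φ hφ
      exact (hφ x).symm
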